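/- Let Ω ⊆ ℝ^N be a bounded open set and p ≥ 2 a real number. Suppose (y_k) and (z_k) are sequences in L^p(Ω) with y_k → y strongly in L^p(Ω) and z_k → z weakly in L^p(Ω). Then liminf_{k→∞} ∫_Ω (|y_k|^{p−2}y_k + |z_k|^{p−2}z_k) z_k dx ≥ ∫_Ω (|y|^{p−2}y + |z|^{p−2}z) z dx. (This is the (𝔄)-property of the operator F(y,z) = |y|^{p−2}y + |z|^{p−2}z.) -/

import Mathlib

open MeasureTheory Filter Topology

namespace FA

lemma phi_abs {p : ℝ} (hp : 2 ≤ p) (t : ℝ) : |(|t| ^ (p - 2) * t)| = |t| ^ (p - 1) := by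
  rw [abs_mul, abs_of_nonneg (by positivity : (0:ℝ) ≤ |t| ^ (p - 2))]
  rcases eq_or_ne t 0 with rfl | ht
  · simp; rw [Real.zero_rpow (by linarith)]
  · have : 0 < |t| := abs_pos.mpr ht
    rw [show p - 1 = (p - 2) + 1 by ring, Real.rpow_add_one this.ne']

lemma phi_mul {p : ℝ} (hp : 2 ≤ p) (t : ℝ) : (|t| ^ (p - 2) * t) * t = |t| ^ p := by
  rcases eq_or_ne t 0 with rfl | ht
  · simp; rw [Real.zero_rpow (by linarith)]
  · have h0 : 0 < |t| := abs_pos.mpr ht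
    have : |t| ^ p = |t| ^ (p - 2) * |t| * |t| := by
      rw [← Real.rpow_add_one h0.ne', ← Real.rpow_add_one h0.ne']; congr 1; ring
    rw [this, mul_assoc, mul_assoc, abs_mul_abs_self]

lemma young {p q : ℝ} (hp : 2 ≤ p) (hq : q = p / (p - 1)) (hpq : p.HolderConjugate q) (a b : ℝ) :
    p * (b * (|a| ^ (p - 2) * a)) - (p - 1) * |a| ^ p ≤ |b| ^ p := by
  have h := Real.young_inequality b (|a| ^ (p - 2) * a) hpq
  rw [phi_abs hp, ← Real.rpow_mul (abs_nonneg a)] at h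
  have h1 : (p - 1) * q = p := by
    rw [hq]; field_simp [show p - 1 ≠ 0 by linarith]
  rw [h1] at h
  have hp0 : 0 < p := by linarith
  have h2 : |a| ^ p / q = (p - 1) * |a| ^ p / p := by
    rw [hq]; field_simp [show p - 1 ≠ 0 by linarith]
  rw [h2, ← add_div, le_div_iff₀ hp0] at h
  linarith

lemma phi_lip_aux {p : ℝ} (hp : 2 ≤ p) {a b : ℝ} (hab : |b| ≤ |a|) :
    |(|a| ^ (p - 2) * a) - (|b| ^ (p - 2) * b)| ≤ (p - 1) * |a| ^ (p - 2) * |a - b| := by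
  rcases eq_or_ne a 0 with rfl | ha
  · have : b = 0 := by simpa using hab
    subst this; simp
  have ha0 : 0 < |a| := abs_pos.mpr ha
  set A := |a| ^ (p - 2) with hA
  have hA0 : 0 ≤ A := by positivity
  set B := |b| ^ (p - 2) with hB
  have hBA : B ≤ A := Real.rpow_le_rpow (abs_nonneg _) hab (by linarith)
  have key : (A - B) * |b| ≤ (p - 2) * A * (|a| - |b|) := by
    have hb := one_add_mul_self_le_rpow_one_add (s := |b| / |a| - 1)
      (by have : 0 ≤ |b| / |a| := by positivity
          linarith) (p := p - 1) (by linarith)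
    have e : (1 + (|b| / |a| - 1)) ^ (p - 1) = B * |b| / (A * |a|) := by
      rw [show 1 + (|b| / |a| - 1) = |b| / |a| by ring,
        Real.div_rpow (abs_nonneg _) (abs_nonneg _), ← phi_abs hp, ← phi_abs hp, abs_mul, abs_mul,
        abs_of_nonneg (by positivity : (0:ℝ) ≤ |b| ^ (p - 2)),
        abs_of_nonneg (by positivity : (0:ℝ) ≤ |a| ^ (p - 2))]
    have hApos : 0 < A := Real.rpow_pos_of_pos ha0 _
    rw [e, le_div_iff₀ (by positivity)] at hb
    have : (1 + (p - 1) * (|b| / |a| - 1)) * (A * |a|) = A * (|a| + (p - 1) * (|b| - |a|)) := by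
      field_simp
    rw [this] at hb
    nlinarith
  have h1 : A * a - B * b = A * (a - b) + (A - B) * b := by ring
  rw [h1]
  have h2 : |a| - |b| ≤ |a - b| := abs_sub_abs_le_abs_sub a b
  calc |A * (a - b) + (A - B) * b| ≤ |A * (a - b)| + |(A - B) * b| := abs_add_le _ _
    _ = A * |a - b| + (A - B) * |b| := by
        rw [abs_mul, abs_mul, abs_of_nonneg hA0, abs_of_nonneg (sub_nonneg.2 hBA)]
    _ ≤ A * |a - b| + (p - 2) * A * |a - b| := by
        have : (p - 2) * A * (|a| - |b|) ≤ (p - 2) * A * |a - b| :=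
          mul_le_mul_of_nonneg_left h2 (mul_nonneg (by linarith) hA0)
        linarith
    _ = _ := by ring

lemma phi_lip {p : ℝ} (hp : 2 ≤ p) (a b c : ℝ) :
    |((|a| ^ (p - 2) * a) - (|b| ^ (p - 2) * b)) * c|
      ≤ (p - 1) * (|a - b| * |(|a| + |b| + |c|)| ^ (p - 1)) := by
  set m := |a| + |b| + |c| with hm
  have hm0 : 0 ≤ m := by positivity
  have hc : |c| ≤ m := by have := abs_nonneg a; have := abs_nonneg b; linarith
  have main : |(|a| ^ (p - 2) * a) - (|b| ^ (p - 2) * b)| ≤ (p - 1) * m ^ (p - 2) * |a - b| := by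
    have mono : ∀ t, |t| ≤ m → (p - 1) * |t| ^ (p - 2) * |a - b| ≤ (p - 1) * m ^ (p - 2) * |a - b| := by
      intro t ht
      have := Real.rpow_le_rpow (abs_nonneg t) ht (show 0 ≤ p - 2 by linarith)
      have h1 : 0 ≤ p - 1 := by linarith
      gcongr
    rcases le_total |b| |a| with h | h
    · exact (phi_lip_aux hp h).trans
        (mono a (by have := abs_nonneg c; have := abs_nonneg b; linarith))
    · rw [abs_sub_comm]
      refine (phi_lip_aux hp h).trans ?_
      rw [abs_sub_comm b a]
      exact mono b (by have := abs_nonneg c; have := abs_nonneg a; linarith)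
  have e : |m| ^ (p - 1) = m ^ (p - 2) * m := by
    rw [← phi_abs hp m, abs_of_nonneg hm0, abs_of_nonneg (by positivity)]
  rw [abs_mul, e]
  calc _ ≤ ((p - 1) * m ^ (p - 2) * |a - b|) * m :=
        mul_le_mul main hc (abs_nonneg _) (by
          have h1 : 0 ≤ p - 1 := by linarith
          positivity)
    _ = _ := by ring

variable {α : Type*} [MeasurableSpace α] {μ : Measure α}

lemma norm_eq {p : ℝ} (hp : 0 < p) (f : Lp ℝ (ENNReal.ofReal p) μ) :
    ‖f‖ = (∫ x, |f x| ^ p ∂μ) ^ (1 / p) := by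
  rw [Lp.norm_def, (Lp.memLp f).eLpNorm_eq_integral_rpow_norm (by simpa using hp) (by simp),
    ENNReal.toReal_ofReal (by positivity), ENNReal.toReal_ofReal hp.le]
  simp

lemma norm_pow {p : ℝ} (hp : 0 < p) (f : Lp ℝ (ENNReal.ofReal p) μ) :
    ‖f‖ ^ p = ∫ x, |f x| ^ p ∂μ := by
  have : 0 ≤ ∫ x, |f x| ^ p ∂μ := integral_nonneg fun x => by positivity
  rw [norm_eq hp, ← Real.rpow_mul this]; simp [hp.ne']

lemma integrable_pow {p : ℝ} (hp : 0 < p) (f : Lp ℝ (ENNReal.ofReal p) μ) :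
    Integrable (fun x => |f x| ^ p) μ := by
  have := (Lp.memLp f).integrable_norm_rpow (by simpa using hp) (by simp)
  simpa [ENNReal.toReal_ofReal hp.le] using this

lemma memLp_pow {p q : ℝ} (hp : 2 ≤ p) (hq : q = p / (p - 1)) (f : Lp ℝ (ENNReal.ofReal p) μ) :
    MemLp (fun x => |f x| ^ (p - 1)) (ENNReal.ofReal q) μ := by
  have := (Lp.memLp f).norm_rpow_div (ENNReal.ofReal (p - 1))
  rw [ENNReal.toReal_ofReal (by linarith), ← ENNReal.ofReal_div_of_pos (by linarith), ← hq] at this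
  simpa using this

lemma memLp_phi {p q : ℝ} (hp : 2 ≤ p) (hq : q = p / (p - 1)) (f : Lp ℝ (ENNReal.ofReal p) μ) :
    MemLp (fun x => |f x| ^ (p - 2) * f x) (ENNReal.ofReal q) μ := by
  refine (memLp_pow hp hq f).of_le ?_ (ae_of_all _ fun x => ?_)
  · have := (Lp.aestronglyMeasurable f).aemeasurable
    exact ((this.abs.pow_const _).mul this).aestronglyMeasurable
  · simp only [Real.norm_eq_abs]
    rw [phi_abs hp]
    exact le_abs_self _

lemma holder {p q : ℝ} (hp : 2 ≤ p) (hq : q = p / (p - 1)) (hpq : p.HolderConjugate q)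
    [Fact (1 ≤ ENNReal.ofReal p)] (u m : Lp ℝ (ENNReal.ofReal p) μ) :
    ∫ x, |u x| * |m x| ^ (p - 1) ∂μ ≤ ‖u‖ * ‖m‖ ^ (p - 1) := by
  have hp0 : 0 < p := by linarith
  have h := integral_mul_norm_le_Lp_mul_Lq hpq (Lp.memLp u) (memLp_pow hp hq m)
  have h1 : (p - 1) * q = p := by
    rw [hq]; field_simp [show p - 1 ≠ 0 by linarith]
  have e : ∀ x, |(|m x| ^ (p - 1))| = |m x| ^ (p - 1) := fun x => abs_of_nonneg (by positivity)
  have e2 : ∀ x, (|m x| ^ (p - 1)) ^ q = |m x| ^ p := fun x => by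
    rw [← Real.rpow_mul (abs_nonneg _), h1]
  simp only [Real.norm_eq_abs, e, e2] at h
  rw [← norm_eq hp0, ← norm_pow hp0, ← Real.rpow_mul (norm_nonneg _)] at h
  have : p * (1 / q) = p - 1 := by
    rw [hq]; field_simp
  rwa [this] at h

lemma bounded {p q : ℝ} (hp : 2 ≤ p) (hq : q = p / (p - 1)) (hpq : p.HolderConjugate q)
    [Fact (1 ≤ ENNReal.ofReal p)] [Fact (1 ≤ ENNReal.ofReal q)]
    (z : ℕ → Lp ℝ (ENNReal.ofReal p) μ) (z₀ : Lp ℝ (ENNReal.ofReal p) μ)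
    (hz : ∀ w : Lp ℝ (ENNReal.ofReal q) μ,
      Tendsto (fun k => ∫ x, (z k) x * w x ∂μ) atTop (𝓝 (∫ x, z₀ x * w x ∂μ))) :
    ∃ C, ∀ k, ‖z k‖ ≤ C := by
  have hp0 : 0 < p := by linarith
  haveI := hpq.ennrealOfReal
  have hpair : ∀ (f : Lp ℝ (ENNReal.ofReal p) μ) (w : Lp ℝ (ENNReal.ofReal q) μ),
      (ContinuousLinearMap.mul ℝ ℝ).lpPairing μ (ENNReal.ofReal p) (ENNReal.ofReal q) f w
        = ∫ x, f x * w x ∂μ := by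
    intro f w
    rw [ContinuousLinearMap.lpPairing_eq_integral]; rfl
  obtain ⟨C, hC⟩ := banach_steinhaus (g := fun k =>
    (ContinuousLinearMap.mul ℝ ℝ).lpPairing μ (ENNReal.ofReal p) (ENNReal.ofReal q) (z k)) (by
      intro w
      obtain ⟨C, hC⟩ := (hz w).norm.bddAbove_range
      refine ⟨C, fun k => ?_⟩
      rw [hpair]
      exact hC ⟨k, rfl⟩)
  refine ⟨C, fun k => ?_⟩
  rcases (norm_nonneg (z k)).eq_or_lt with h0 | h0
  · rw [← h0]; exact (norm_nonneg _).trans (hC k)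
  set w := (memLp_phi hp hq (z k)).toLp with hw
  have hwe : w =ᵐ[μ] fun x => |z k x| ^ (p - 2) * z k x := MemLp.coeFn_toLp _
  have i1 : ∫ x, z k x * w x ∂μ = ‖z k‖ ^ p := by
    rw [norm_pow hp0]
    refine integral_congr_ae ?_
    filter_upwards [hwe] with x hx
    rw [hx, mul_comm, phi_mul hp]
  have hq0 : 0 < q := hpq.symm.pos
  have h1 : (p - 1) * q = p := by
    rw [hq]; field_simp [show p - 1 ≠ 0 by linarith]
  have i2 : ‖w‖ = ‖z k‖ ^ (p - 1) := by
    rw [norm_eq hq0]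
    have : ∫ x, |w x| ^ q ∂μ = ‖z k‖ ^ p := by
      rw [norm_pow hp0]
      refine integral_congr_ae ?_
      filter_upwards [hwe] with x hx
      rw [hx, phi_abs hp, ← Real.rpow_mul (abs_nonneg _), h1]
    rw [this, ← Real.rpow_mul (norm_nonneg _)]
    congr 1
    rw [hq]; field_simp
  have h := ContinuousLinearMap.le_of_opNorm_le _ (hC k) w
  rw [hpair, i1, i2, Real.norm_of_nonneg (by positivity)] at h
  have e : ‖z k‖ ^ p = ‖z k‖ * ‖z k‖ ^ (p - 1) := by
    rw [mul_comm, ← Real.rpow_add_one h0.ne']; congr 1; ring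
  rw [e] at h
  exact le_of_mul_le_mul_right h (Real.rpow_pos_of_pos h0 _)

lemma main {p q : ℝ} (hp : 2 ≤ p) (hq : q = p / (p - 1)) (hpq : p.HolderConjugate q)
    [Fact (1 ≤ ENNReal.ofReal p)] [Fact (1 ≤ ENNReal.ofReal q)]
    (y z : ℕ → Lp ℝ (ENNReal.ofReal p) μ)
    (y₀ z₀ : Lp ℝ (ENNReal.ofReal p) μ)
    (hy : Tendsto (fun k => ‖y k - y₀‖) atTop (𝓝 0))
    (hz : ∀ w : Lp ℝ (ENNReal.ofReal q) μ,
      Tendsto (fun k => ∫ x, (z k) x * w x ∂μ) atTop (𝓝 (∫ x, z₀ x * w x ∂μ))) :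
    (∫ x, (|y₀ x| ^ (p - 2) * y₀ x + |z₀ x| ^ (p - 2) * z₀ x) * z₀ x ∂μ) ≤
      Filter.liminf
        (fun k => ∫ x, (|(y k) x| ^ (p - 2) * (y k) x
          + |(z k) x| ^ (p - 2) * (z k) x) * (z k) x ∂μ) atTop := by
  have hp0 : 0 < p := by linarith
  haveI := hpq.ennrealOfReal
  obtain ⟨C, hC⟩ := bounded hp hq hpq z z₀ hz
  have hC0 : 0 ≤ C := (norm_nonneg _).trans (hC 0)
  -- integrability of products
  have hint : ∀ f g : Lp ℝ (ENNReal.ofReal p) μ,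
      Integrable (fun x => g x * (|f x| ^ (p - 2) * f x)) μ := fun f g =>
    (Lp.memLp g).integrable_mul (memLp_phi hp hq f)
  have hsplit : ∀ f g : Lp ℝ (ENNReal.ofReal p) μ,
      ∫ x, (|f x| ^ (p - 2) * f x + |g x| ^ (p - 2) * g x) * g x ∂μ
        = ∫ x, g x * (|f x| ^ (p - 2) * f x) ∂μ + ‖g‖ ^ p := by
    intro f g
    rw [norm_pow hp0, ← integral_add (hint f g) (integrable_pow hp0 g)]
    refine integral_congr_ae (ae_of_all _ fun x => ?_)
    simp only
    rw [add_mul, phi_mul hp, mul_comm]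
  -- weak convergence against phi(f)
  have hweak : ∀ f : Lp ℝ (ENNReal.ofReal p) μ,
      Tendsto (fun k => ∫ x, z k x * (|f x| ^ (p - 2) * f x) ∂μ) atTop
        (𝓝 (∫ x, z₀ x * (|f x| ^ (p - 2) * f x) ∂μ)) := by
    intro f
    obtain ⟨w, hw⟩ : ∃ w : Lp ℝ (ENNReal.ofReal q) μ, w =ᵐ[μ] fun x => |f x| ^ (p - 2) * f x :=
      ⟨_, (memLp_phi hp hq f).coeFn_toLp⟩
    have h := hz w
    have e : ∀ g : Lp ℝ (ENNReal.ofReal p) μ, ∫ x, g x * w x ∂μ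
        = ∫ x, g x * (|f x| ^ (p - 2) * f x) ∂μ := by
      intro g
      refine integral_congr_ae ?_
      filter_upwards [hw] with x hx
      rw [hx]
    simpa only [e] using h
  -- strong-weak product
  have hdiff : Tendsto (fun k => ∫ x, z k x * (|y k x| ^ (p - 2) * y k x) ∂μ
      - ∫ x, z k x * (|y₀ x| ^ (p - 2) * y₀ x) ∂μ) atTop (𝓝 0) := by
    obtain ⟨D, hD⟩ := hy.bddAbove_range
    have hD' : ∀ k, ‖y k - y₀‖ ≤ D := fun k => hD ⟨k, rfl⟩
    have hD0 : 0 ≤ D := (norm_nonneg _).trans (hD' 0)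
    set K := D + ‖y₀‖ + ‖y₀‖ + C with hK
    have hlim : Tendsto (fun k => (p - 1) * (‖y k - y₀‖ * K ^ (p - 1))) atTop (𝓝 0) := by
      simpa using (hy.mul_const (K ^ (p - 1))).const_mul (p - 1)
    refine squeeze_zero_norm (fun k => ?_) hlim
    rw [← integral_sub (hint _ _) (hint _ _)]
    set M : Lp ℝ (ENNReal.ofReal p) μ := |y k| + |y₀| + |z k| with hM
    have hMe : M =ᵐ[μ] fun x => |y k x| + |y₀ x| + |z k x| := by
      filter_upwards [Lp.coeFn_add (|y k| + |y₀|) (|z k|), Lp.coeFn_add (|y k|) (|y₀|),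
        Lp.coeFn_abs (y k), Lp.coeFn_abs y₀, Lp.coeFn_abs (z k)] with x h1 h2 h3 h4 h5
      rw [hM, h1, Pi.add_apply, h2, Pi.add_apply, h3, h4, h5]
    have hMn : ‖M‖ ≤ K := by
      have h1 : ‖M‖ ≤ ‖y k‖ + ‖y₀‖ + ‖z k‖ := by
        refine (norm_add_le _ _).trans ?_
        rw [norm_abs_eq_norm]
        gcongr
        refine (norm_add_le _ _).trans ?_
        rw [norm_abs_eq_norm, norm_abs_eq_norm]
      have h2 : ‖y k‖ ≤ D + ‖y₀‖ := by
        have := norm_add_le (y k - y₀) y₀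
        rw [sub_add_cancel] at this
        linarith [hD' k]
      linarith [hC k]
    have hI : Integrable (fun x => |(y k - y₀) x| * |M x| ^ (p - 1)) μ :=
      (Lp.memLp (y k - y₀)).abs.integrable_mul (memLp_pow hp hq M)
    calc _ ≤ ∫ x, (p - 1) * (|(y k - y₀) x| * |M x| ^ (p - 1)) ∂μ := by
          refine norm_integral_le_of_norm_le (hI.const_mul _) ?_
          filter_upwards [hMe, Lp.coeFn_sub (y k) y₀] with x h1 h2
          rw [h1, h2, Pi.sub_apply, ← mul_sub, mul_comm]
          exact phi_lip hp _ _ _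
      _ = (p - 1) * ∫ x, |(y k - y₀) x| * |M x| ^ (p - 1) ∂μ := integral_const_mul _ _
      _ ≤ (p - 1) * (‖y k - y₀‖ * ‖M‖ ^ (p - 1)) :=
          mul_le_mul_of_nonneg_left (holder hp hq hpq _ _) (by linarith)
      _ ≤ _ := by
          have h1 : 0 ≤ p - 1 := by linarith
          gcongr
  have hprod : Tendsto (fun k => ∫ x, z k x * (|y k x| ^ (p - 2) * y k x) ∂μ) atTop
      (𝓝 (∫ x, z₀ x * (|y₀ x| ^ (p - 2) * y₀ x) ∂μ)) := by
    simpa using hdiff.add (hweak y₀)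
  have hlow : Tendsto (fun k => ∫ x, z k x * (|y k x| ^ (p - 2) * y k x) ∂μ
      + (p * ∫ x, z k x * (|z₀ x| ^ (p - 2) * z₀ x) ∂μ - (p - 1) * ‖z₀‖ ^ p)) atTop
      (𝓝 (∫ x, (|y₀ x| ^ (p - 2) * y₀ x + |z₀ x| ^ (p - 2) * z₀ x) * z₀ x ∂μ)) := by
    have e : ∫ x, z₀ x * (|z₀ x| ^ (p - 2) * z₀ x) ∂μ = ‖z₀‖ ^ p := by
      rw [norm_pow hp0]
      refine integral_congr_ae (ae_of_all _ fun x => ?_)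
      simp only
      rw [mul_comm, phi_mul hp]
    have h := hprod.add (((hweak z₀).const_mul p).sub_const ((p - 1) * ‖z₀‖ ^ p))
    rw [e] at h
    rw [hsplit]
    convert h using 2
    ring
  simp only [hsplit y₀ z₀] at hlow ⊢
  simp only [hsplit]
  rw [← hlow.liminf_eq]
  refine liminf_le_liminf (Eventually.of_forall fun k => ?_) hlow.isBoundedUnder_ge ?_
  · gcongr
    rw [norm_pow hp0 (z k), norm_pow hp0 z₀, ← integral_const_mul, ← integral_const_mul,
      ← integral_sub ((hint _ _).const_mul _) ((integrable_pow hp0 _).const_mul _)]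
    exact integral_mono (((hint _ _).const_mul _).sub ((integrable_pow hp0 _).const_mul _))
      (integrable_pow hp0 _) fun x => young hp hq hpq _ _
  · obtain ⟨E, hE⟩ := hprod.bddAbove_range
    refine IsBoundedUnder.isCoboundedUnder_ge ⟨E + C ^ p, ?_⟩
    rw [eventually_map]
    refine Eventually.of_forall fun k => ?_
    have h1 := hE ⟨k, rfl⟩
    have h2 : ‖z k‖ ^ p ≤ C ^ p := Real.rpow_le_rpow (norm_nonneg _) (hC k) hp0.le
    exact add_le_add h1 h2

end FA

/-- the (𝔄)-property of `F(y,z) = |y|^{p-2}y + |z|^{p-2}z`: if `y_k → y` strongly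
in `L^p` and `z_k → z` weakly in `L^p`, then
`liminf ∫ F(y_k,z_k) z_k dx ≥ ∫ F(y,z) z dx`. -/
theorem F_A_property
    {N : ℕ} (hN : 1 ≤ N)
    (Ω : Set (EuclideanSpace ℝ (Fin N))) (hΩo : IsOpen Ω)
    (hΩb : Bornology.IsBounded Ω)
    (p q : ℝ) (hp : 2 ≤ p) (hq : q = p / (p - 1))
    [Fact (1 ≤ ENNReal.ofReal p)] [Fact (1 ≤ ENNReal.ofReal q)]
    (μ : Measure (EuclideanSpace ℝ (Fin N))) (hμ : μ = volume.restrict Ω)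
    (y z : ℕ → Lp ℝ (ENNReal.ofReal p) μ)
    (y₀ z₀ : Lp ℝ (ENNReal.ofReal p) μ)
    -- strong convergence y_k → y₀ in L^p
    (hy : Tendsto (fun k => ‖y k - y₀‖) atTop (𝓝 0))
    -- weak convergence z_k → z₀ in L^p
    (hz : ∀ w : Lp ℝ (ENNReal.ofReal q) μ,
      Tendsto (fun k => ∫ x, (z k) x * w x ∂μ) atTop (𝓝 (∫ x, z₀ x * w x ∂μ))) :
    (∫ x, (|y₀ x| ^ (p - 2) * y₀ x + |z₀ x| ^ (p - 2) * z₀ x) * z₀ x ∂μ) ≤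
      Filter.liminf
        (fun k => ∫ x, (|(y k) x| ^ (p - 2) * (y k) x
          + |(z k) x| ^ (p - 2) * (z k) x) * (z k) x ∂μ) atTop := by
  exact FA.main hp hq ((Real.holderConjugate_iff_eq_conjExponent (by linarith)).2 hq) y z y₀ z₀ hy hz
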